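/- arXiv:1801.01803 — 6 statements merged into one kernel-verified Lean document; each statement's English description precedes it below -/
import Mathlib

section
/- Let M ≥ 1 and T ≥ 1 be integers, L = min(M,T), and let the initial ages h_{1,1} > h_{1,2} > … > h_{1,M} be strictly decreasing positive integers. Then for every frame k ≥ 1 and every position j ∈ {1,…,L}, the j-th client served by the round-robin schedule in frame k, namely i_j = σ((k−1)L + j − 1), satisfies h_{k,i_j} ≥ h_{k,i'} for every client i' ∈ {1,…,M} \ {i_1,…,i_{j−1}}. In other words, each delivery of the round-robin schedule goes to a client of maximal current age among clients not yet served in that frame, so the round-robin schedule is a realization of the Greedy policy when all channels are error-free. -/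
/-- The age process: `ageP h1 s k i` is the age of client `i` at frame `k` (frames
are 1-indexed; `ageP h1 s 1 = h1`).  The ages evolve by `h_{k+1,i} = 1` if `i ∈ s k`
and `h_{k+1,i} = h_{k,i} + 1` otherwise. -/
def ageP (h1 : ℕ → ℕ) (s : ℕ → Finset ℕ) : ℕ → ℕ → ℕ
  | 0, i => h1 i
  | 1, i => h1 i
  | (k+2), i => if i ∈ s (k+1) then 1 else ageP h1 s (k+1) i + 1

/-- `rrClient M n = (n mod M) + 1`, the client served in the `n`-th round-robin slot. -/
def rrClient (M n : ℕ) : ℕ := n % M + 1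

/-- The round-robin schedule: in frame `k ≥ 1` the `L = min M T` distinct clients
`σ((k-1)L), …, σ(kL - 1)` are served. -/
def rrSched (M T : ℕ) (k : ℕ) : Finset ℕ :=
  (Finset.range (min M T)).image (fun j => rrClient M ((k - 1) * min M T + j))

theorem rr_inj (M N a b : ℕ) (ha : a < M) (hb : b < M)
    (h : rrClient M (N + a) = rrClient M (N + b)) : a = b := by
  unfold rrClient at h
  have h2 : N + a ≡ N + b [MOD M] := by
    unfold Nat.ModEq
    omega
  have h3 := Nat.ModEq.add_left_cancel' N h2
  unfold Nat.ModEq at h3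
  rwa [Nat.mod_eq_of_lt ha, Nat.mod_eq_of_lt hb] at h3

theorem rr_surj (M N i : ℕ) (h1 : 1 ≤ i) (hM : i ≤ M) :
    ∃ c, c < M ∧ i = rrClient M (N + c) := by
  have hp : 0 < M := by omega
  have hN := Nat.mod_lt N hp
  have hd := Nat.mod_add_div N M
  refine ⟨(i - 1 + (M - N % M)) % M, Nat.mod_lt _ hp, ?_⟩
  unfold rrClient
  rw [Nat.add_mod_mod]
  have : N + (i - 1 + (M - N % M)) = (i - 1) + M * (N / M + 1) := by
    rw [Nat.mul_add]
    omega
  rw [this, Nat.add_mul_mod_self_left, Nat.mod_eq_of_lt (by omega)]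
  omega

theorem rr_mem (M T k c : ℕ) (hc : c < M) :
    rrClient M (k * min M T + c) ∈ rrSched M T (k + 1) ↔ c < min M T := by
  unfold rrSched
  simp only [Finset.mem_image, Finset.mem_range, Nat.add_sub_cancel]
  constructor
  · rintro ⟨j, hj, h⟩
    have := rr_inj M _ j c (by omega) hc h
    omega
  · intro h
    exact ⟨c, h, rfl⟩

theorem age_pos (M T : ℕ) (h1 : ℕ → ℕ) (hpos : ∀ i ∈ Finset.Icc 1 M, 1 ≤ h1 i)
    (k i : ℕ) (hi : 1 ≤ i) (hiM : i ≤ M) : 1 ≤ ageP h1 (rrSched M T) (k + 1) i := by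
  cases k with
  | zero => exact hpos i (Finset.mem_Icc.2 ⟨hi, hiM⟩)
  | succ k =>
    rw [ageP]
    split_ifs <;> omega

theorem rr_main (M T : ℕ) (hM : 1 ≤ M) (hT : 1 ≤ T)
    (h1 : ℕ → ℕ) (hpos : ∀ i ∈ Finset.Icc 1 M, 1 ≤ h1 i)
    (hdec : ∀ i j : ℕ, 1 ≤ i → i < j → j ≤ M → h1 j < h1 i) (k : ℕ) :
    ∀ a b : ℕ, a ≤ b → b < M →
      ageP h1 (rrSched M T) (k + 1) (rrClient M (k * min M T + b))
        ≤ ageP h1 (rrSched M T) (k + 1) (rrClient M (k * min M T + a)) := by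
  induction k with
  | zero =>
    intro a b hab hb
    simp only [Nat.zero_mul, Nat.zero_add, rrClient, ageP]
    rw [Nat.mod_eq_of_lt hb, Nat.mod_eq_of_lt (by omega : a < M)]
    rcases Nat.eq_or_lt_of_le hab with h | h
    · rw [h]
    · exact (hdec (a + 1) (b + 1) (by omega) (by omega) (by omega)).le
  | succ k ih =>
    intro a b hab hb
    have e : ∀ c, (k + 1) * min M T + c = k * min M T + (min M T + c) := by
      intro c; ring
    rw [e a, e b]
    by_cases hL : min M T + b < M
    · have nb := (rr_mem M T k (min M T + b) hL).not.2 (by omega)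
      have na := (rr_mem M T k (min M T + a) (by omega)).not.2 (by omega)
      have := ih (min M T + a) (min M T + b) (by omega) hL
      rw [ageP, ageP, if_neg nb, if_neg na]
      omega
    · have eb : rrClient M (k * min M T + (min M T + b))
          = rrClient M (k * min M T + (min M T + b - M)) := by
        unfold rrClient
        have : k * min M T + (min M T + b) = k * min M T + (min M T + b - M) + M := by omega
        rw [this, Nat.add_mod_right]
      have mb := (rr_mem M T k (min M T + b - M) (by omega)).2 (by omega)
      rw [eb]
      have h2 : ageP h1 (rrSched M T) (k + 1 + 1)
          (rrClient M (k * min M T + (min M T + b - M))) = 1 := by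
        rw [ageP, if_pos mb]
      rw [h2]
      have := Nat.mod_lt (k * min M T + (min M T + a)) (by omega : M > 0)
      exact age_pos M T h1 hpos _ _ (by unfold rrClient; omega) (by unfold rrClient; omega)

/-- Each delivery of the round-robin schedule goes to a client of maximal current age
among the clients not yet served in that frame: round-robin is a realization of the
Greedy policy when all channels are error-free. -/
theorem stmt0 (M T : ℕ) (hM : 1 ≤ M) (hT : 1 ≤ T)
    (h1 : ℕ → ℕ) (hpos : ∀ i ∈ Finset.Icc 1 M, 1 ≤ h1 i)
    (hdec : ∀ i j : ℕ, 1 ≤ i → i < j → j ≤ M → h1 j < h1 i)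
    (k : ℕ) (hk : 1 ≤ k) (j : ℕ) (hj : 1 ≤ j) (hjL : j ≤ min M T)
    (i' : ℕ) (hi'1 : 1 ≤ i') (hi'M : i' ≤ M)
    (hi'new : ∀ j' : ℕ, 1 ≤ j' → j' < j →
      i' ≠ rrClient M ((k - 1) * min M T + j' - 1)) :
    ageP h1 (rrSched M T) k i'
      ≤ ageP h1 (rrSched M T) k (rrClient M ((k - 1) * min M T + j - 1)) := by
  obtain ⟨k, rfl⟩ : ∃ m, k = m + 1 := ⟨k - 1, by omega⟩
  simp only [Nat.add_sub_cancel] at hi'new ⊢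
  obtain ⟨c, hc, hic⟩ := rr_surj M (k * min M T) i' hi'1 hi'M
  have hcj : j - 1 ≤ c := by
    by_contra hlt
    exact hi'new (c + 1) (by omega) (by omega) hic
  have := rr_main M T hM hT h1 hpos hdec k (j - 1) c hcj hc
  rw [hic, Nat.add_sub_assoc hj]
  exact this
end

section
/- Let M ≥ 1 and T ≥ 1 be integers, and write M = m1·T + m2 with m1 = ⌊M/T⌋ and m2 = M mod T. Under the round-robin schedule, for every choice of positive integer initial ages and for every frame k ≥ m1 + 2, the sum of the ages satisfies Σ_{i=1}^M h_{k,i} = T·m1·(m1+1)/2 + m2·(m1+1). In particular the sum of the ages is constant from frame m1+2 onward and is independent of the initial ages. -/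
theorem aux_modinj (M x y : ℕ) (h : x % M = y % M) (h1 : x < y + M) (h2 : y < x + M) : x = y := by
  rcases le_total x y with hle | hle
  · have := (Nat.modEq_iff_dvd' hle).1 h
    have := Nat.eq_zero_of_dvd_of_lt this (by omega)
    omega
  · have := (Nat.modEq_iff_dvd' hle).1 h.symm
    have := Nat.eq_zero_of_dvd_of_lt this (by omega)
    omega

theorem aux_age (M T : ℕ) (hM : 1 ≤ M) (hT : 1 ≤ T) (h1 : ℕ → ℕ) (K : ℕ) :
    ∀ j, j < M → j < K * min M T →
      ageP h1 (rrSched M T) (K + 1) (rrClient M (K * min M T - 1 - j)) = j / min M T + 1 := by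
  have hL : 1 ≤ min M T := by omega
  have hLM : min M T ≤ M := by omega
  induction K with
  | zero => intro j _ h; omega
  | succ K ih =>
    intro j hj hjK
    rw [ageP, rrSched]
    generalize min M T = L at *
    have e : (K + 1) * L = K * L + L := by ring
    rw [e] at hjK ⊢
    simp only [Nat.add_sub_cancel]
    by_cases hjL : j < L
    · rw [if_pos, Nat.div_eq_of_lt hjL]
      rw [Finset.mem_image]
      refine ⟨L - 1 - j, Finset.mem_range.2 (by omega), ?_⟩
      congr 1; omega
    · rw [if_neg]
      · have h := ih (j - L) (by omega) (by omega)
        have e2 : K * L + L - 1 - j = K * L - 1 - (j - L) := by omega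
        rw [e2, h]
        have e3 : j / L = (j - L) / L + 1 := by
          rw [← Nat.add_div_right _ (by omega)]
          congr 1; omega
        omega
      · rw [Finset.mem_image]
        rintro ⟨a, ha, hb⟩
        rw [Finset.mem_range] at ha
        simp only [rrClient] at hb
        have := aux_modinj M _ _ (Nat.succ_injective hb) (by omega) (by omega)
        omega

theorem aux_part (T q r : ℕ) (hr : r ≤ T) (hT : 1 ≤ T) :
    ∑ j ∈ Finset.range (T * q + r), (j / T + 1)
      = ∑ j ∈ Finset.range (T * q), (j / T + 1) + r * (q + 1) := by
  rw [Finset.sum_range_add]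
  congr 1
  rcases hr.lt_or_eq with h | h
  all_goals
    rw [Finset.sum_congr rfl (g := fun _ => q + 1)]
    · simp
    · intro x hx
      rw [Finset.mem_range] at hx
      rw [Nat.mul_add_div (by omega), Nat.div_eq_of_lt (by omega)]
      try simp

theorem aux_sum (T q : ℕ) (hT : 1 ≤ T) :
    2 * ∑ j ∈ Finset.range (T * q), (j / T + 1) = T * q * (q + 1) := by
  induction q with
  | zero => simp
  | succ q ih =>
    rw [Nat.mul_succ, aux_part T q T le_rfl hT, Nat.mul_add, ih]
    ring

/-- Steady state of the round-robin (Greedy) schedule with error-free channels: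
writing `M = m1·T + m2` with `m1 = ⌊M/T⌋`, `m2 = M mod T`, for every frame
`k ≥ m1 + 2` the sum of the ages equals `T·m1·(m1+1)/2 + m2·(m1+1)`, independently
of the initial ages. -/
theorem stmt1 (M T : ℕ) (hM : 1 ≤ M) (hT : 1 ≤ T)
    (h1 : ℕ → ℕ) (hpos : ∀ i ∈ Finset.Icc 1 M, 1 ≤ h1 i)
    (k : ℕ) (hk : M / T + 2 ≤ k) :
    ∑ i ∈ Finset.Icc 1 M, ageP h1 (rrSched M T) k i
      = T * (M / T) * (M / T + 1) / 2 + (M % T) * (M / T + 1) := by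
  obtain ⟨K, rfl⟩ : ∃ K, k = K + 1 :=
    Nat.exists_eq_add_of_le' (le_trans (Nat.le_add_left 1 (M / T + 1)) hk)
  have hK1 : M / T + 1 ≤ K := Nat.le_of_succ_le_succ hk
  have hK0 : 1 ≤ K := le_trans (Nat.le_add_left 1 (M / T)) hK1
  have hdm := Nat.div_add_mod M T
  have hml := Nat.mod_lt M hT
  have hK : M ≤ K * min M T := by
    rcases le_total M T with h | h
    · rw [min_eq_left h]; exact Nat.le_mul_of_pos_left _ (by omega)
    · rw [min_eq_right h]
      have : (M / T + 1) * T ≤ K * T := Nat.mul_le_mul_right _ hK1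
      have e : (M / T + 1) * T = T * (M / T) + T := by ring
      omega
  have hinj : Set.InjOn (fun j => rrClient M (K * min M T - 1 - j)) (Finset.range M) := by
    intro a ha b hb hab
    simp only [Finset.coe_range, Set.mem_Iio] at ha hb
    simp only [rrClient] at hab
    have := aux_modinj M _ _ (Nat.succ_injective hab) (by omega) (by omega)
    omega
  have himg : (Finset.range M).image (fun j => rrClient M (K * min M T - 1 - j))
      = Finset.Icc 1 M := by
    apply Finset.eq_of_subset_of_card_le
    · intro x hx
      rw [Finset.mem_image] at hx
      obtain ⟨a, _, rfl⟩ := hx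
      have := Nat.mod_lt (K * min M T - 1 - a) hM
      simp only [rrClient, Finset.mem_Icc]
      omega
    · rw [Finset.card_image_of_injOn hinj]; simp
  rw [← himg, Finset.sum_image hinj]
  have hs : ∑ j ∈ Finset.range M,
      ageP h1 (rrSched M T) (K + 1) (rrClient M (K * min M T - 1 - j))
      = ∑ j ∈ Finset.range M, (j / T + 1) := by
    apply Finset.sum_congr rfl
    intro j hj
    rw [Finset.mem_range] at hj
    rw [aux_age M T hM hT h1 K j hj (by omega)]
    rcases le_total M T with h | h
    · rw [min_eq_left h, Nat.div_eq_of_lt hj, Nat.div_eq_of_lt (by omega)]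
    · rw [min_eq_right h]
  rw [hs]
  have h2 := aux_part T (M / T) (M % T) hml.le hT
  rw [hdm] at h2
  have h3 := aux_sum T (M / T) hT
  rw [h2, ← h3]
  simp
end

section
/- Let (I_m)_{m≥1} be positive integers, t_0 = 0, t_D = Σ_{m=1}^{D} I_m, and let h_k = k − max{ t_j : t_j < k } be the associated age process. Suppose that as D → ∞, (1/D)·Σ_{m=1}^{D} I_m → μ and (1/D)·Σ_{m=1}^{D} I_m² → s for some finite reals μ ≥ 1 and s. Then the time-average age converges: (1/K)·Σ_{k=1}^{K} h_k → s/(2μ) + 1/2 as K → ∞. -/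
open Filter

/-- `deliveryTime I D = Σ_{m=1}^{D} I m`, the frame of the `D`-th delivery
(`deliveryTime I 0 = 0`). -/
def deliveryTime (I : ℕ → ℕ) (D : ℕ) : ℕ := ∑ m ∈ Finset.Icc 1 D, I m

/-- The single-client age process: `ageS I k = k − max{ t_j : t_j < k }`, where
`t_j` are the partial sums of the inter-delivery times `I`. -/
def ageS (I : ℕ → ℕ) (k : ℕ) : ℕ :=
  k - ((Finset.range (k + 1)).filter (fun j => deliveryTime I j < k)).sup (deliveryTime I)


theorem dT_succ (I : ℕ → ℕ) (n : ℕ) :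
    deliveryTime I (n + 1) = deliveryTime I n + I (n + 1) := by
  unfold deliveryTime
  rw [Finset.sum_Icc_succ_top (by omega)]

theorem dT_mono (I : ℕ → ℕ) : Monotone (deliveryTime I) :=
  monotone_nat_of_le_succ (fun n => by rw [dT_succ]; omega)

theorem dT_ge (I : ℕ → ℕ) (hI : ∀ m : ℕ, 1 ≤ m → 1 ≤ I m) (n : ℕ) :
    n ≤ deliveryTime I n := by
  induction n with
  | zero => simp
  | succ n ih =>
    have := hI (n + 1) (by omega)
    rw [dT_succ]; omega

theorem age_eq (I : ℕ → ℕ) (hI : ∀ m : ℕ, 1 ≤ m → 1 ≤ I m) (n r : ℕ) (h1 : 1 ≤ r)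
    (h2 : r ≤ I (n + 1)) : ageS I (deliveryTime I n + r) = r := by
  unfold ageS
  have : ((Finset.range (deliveryTime I n + r + 1)).filter
      (fun j => deliveryTime I j < deliveryTime I n + r)).sup (deliveryTime I)
      = deliveryTime I n := by
    apply le_antisymm
    · apply Finset.sup_le
      intro j hj
      rw [Finset.mem_filter] at hj
      apply dT_mono
      by_contra hc
      have h3 : deliveryTime I (n + 1) ≤ deliveryTime I j := dT_mono I (by omega)
      rw [dT_succ] at h3
      omega
    · apply Finset.le_sup (f := deliveryTime I)
      rw [Finset.mem_filter, Finset.mem_range]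
      have := dT_ge I hI n
      omega
  rw [this]; omega

theorem age_sum_part (I : ℕ → ℕ) (hI : ∀ m : ℕ, 1 ≤ m → 1 ≤ I m) (n r : ℕ)
    (h2 : r ≤ I (n + 1)) :
    ∑ k ∈ Finset.Icc 1 (deliveryTime I n + r), (ageS I k : ℝ) =
    ∑ k ∈ Finset.Icc 1 (deliveryTime I n), (ageS I k : ℝ) + ((r : ℝ) ^ 2 + r) / 2 := by
  induction r with
  | zero => simp
  | succ r ih =>
    rw [← add_assoc, Finset.sum_Icc_succ_top (by omega), ih (by omega), add_assoc _ r 1,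
      age_eq I hI n (r + 1) (by omega) h2]
    push_cast; ring

theorem age_sum (I : ℕ → ℕ) (hI : ∀ m : ℕ, 1 ≤ m → 1 ≤ I m) (n : ℕ) :
    ∑ k ∈ Finset.Icc 1 (deliveryTime I n), (ageS I k : ℝ) =
    (∑ m ∈ Finset.Icc 1 n, (I m : ℝ) ^ 2 + ∑ m ∈ Finset.Icc 1 n, (I m : ℝ)) / 2 := by
  induction n with
  | zero => simp [deliveryTime]
  | succ n ih =>
    rw [dT_succ, age_sum_part I hI n _ le_rfl, ih, Finset.sum_Icc_succ_top (by omega),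
      Finset.sum_Icc_succ_top (by omega)]
    ring

/-- Renewal-reward convergence of the time-average age: if the sample means of the
inter-delivery times converge to `μ` and of their squares to `s`, then the
time-average age converges to `s/(2μ) + 1/2`. -/
theorem stmt6 (I : ℕ → ℕ) (hI : ∀ m : ℕ, 1 ≤ m → 1 ≤ I m)
    (μ s : ℝ) (hμ : 1 ≤ μ)
    (hmean : Tendsto (fun D : ℕ => (∑ m ∈ Finset.Icc 1 D, (I m : ℝ)) / D)
      atTop (nhds μ))
    (hsq : Tendsto (fun D : ℕ => (∑ m ∈ Finset.Icc 1 D, (I m : ℝ) ^ 2) / D)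
      atTop (nhds s)) :
    Tendsto (fun K : ℕ => (∑ k ∈ Finset.Icc 1 K, (ageS I k : ℝ)) / K)
      atTop (nhds (s / (2 * μ) + 1 / 2)) := by
  have hTc : ∀ n, ((deliveryTime I n : ℕ) : ℝ) = ∑ m ∈ Finset.Icc 1 n, (I m : ℝ) := by
    intro n; simp [deliveryTime]
  have hAmono : Monotone (fun K : ℕ => ∑ k ∈ Finset.Icc 1 K, (ageS I k : ℝ)) := by
    intro a b hab
    apply Finset.sum_le_sum_of_subset_of_nonneg (Finset.Icc_subset_Icc_right hab)
    intros; positivity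
  have hA := age_sum I hI
  simp only [← hTc] at hA hmean
  set S : ℕ → ℝ := fun n => ∑ m ∈ Finset.Icc 1 n, (I m : ℝ) ^ 2 with hS
  set A : ℕ → ℝ := fun K => ∑ k ∈ Finset.Icc 1 K, (ageS I k : ℝ) with hAd
  change Tendsto (fun D : ℕ => S D / D) atTop (nhds s) at hsq
  change ∀ n, A (deliveryTime I n) = (S n + deliveryTime I n) / 2 at hA
  change Tendsto (fun K : ℕ => A K / K) atTop _
  have hA0 : ∀ K, 0 ≤ A K := fun K => by positivity
  have hTge := dT_ge I hI
  set T := deliveryTime I with hT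
  clear_value S A
  have hμ0 : μ ≠ 0 := by positivity
  have hr : Tendsto (fun n : ℕ => (n : ℝ) / ((n + 1 : ℕ) : ℝ)) atTop (nhds 1) := by
    simpa using tendsto_natCast_div_add_atTop (1 : ℝ)
  have hlim : (s + μ) / 2 / μ = s / (2 * μ) + 1 / 2 := by field_simp
  have hB : Tendsto (fun n : ℕ => A (T n) / n) atTop (nhds ((s + μ) / 2)) := by
    refine ((hsq.add hmean).div_const 2).congr (fun n => ?_)
    rw [hA]; ring
  have hlow : Tendsto (fun n : ℕ => A (T n) / T (n + 1)) atTop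
      (nhds (s / (2 * μ) + 1 / 2)) := by
    have := ((hB.mul hr).div (hmean.comp (tendsto_add_atTop_nat 1)) hμ0)
    rw [mul_one, hlim] at this
    refine this.congr' ?_
    filter_upwards [eventually_ge_atTop 1] with n hn
    have h1 : (n : ℝ) ≠ 0 := by positivity
    have h2 : ((n + 1 : ℕ) : ℝ) ≠ 0 := by positivity
    have h3 : (T (n + 1) : ℝ) ≠ 0 := by
      have := hTge (n + 1)
      exact_mod_cast (by omega : T (n + 1) ≠ 0)
    simp only [Pi.div_apply, Function.comp]
    field_simp
  have hup : Tendsto (fun n : ℕ => A (T (n + 1)) / T n) atTop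
      (nhds (s / (2 * μ) + 1 / 2)) := by
    have := (((hB.comp (tendsto_add_atTop_nat 1)).div hmean hμ0).div hr one_ne_zero)
    rw [div_one, hlim] at this
    refine this.congr' ?_
    filter_upwards [eventually_ge_atTop 1] with n hn
    have h1 : (n : ℝ) ≠ 0 := by positivity
    have h2 : ((n + 1 : ℕ) : ℝ) ≠ 0 := by positivity
    have h3 : (T n : ℝ) ≠ 0 := by
      have := hTge n
      exact_mod_cast (by omega : T n ≠ 0)
    simp only [Pi.div_apply, Function.comp]
    field_simp
  let N : ℕ → ℕ := fun K => Nat.findGreatest (fun n => T n ≤ K) K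
  have hT0 : T 0 = 0 := by simp [hT, deliveryTime]
  have hN1 : ∀ K, T (N K) ≤ K := fun K =>
    Nat.findGreatest_spec (P := fun n => T n ≤ K) (Nat.zero_le K) (by simp [hT0])
  have hN2 : ∀ K, K < T (N K + 1) := by
    intro K
    by_contra hc
    push Not at hc
    have h1 := hTge (N K + 1)
    have := Nat.le_findGreatest (P := fun n => T n ≤ K) (h1.trans hc) hc
    change N K + 1 ≤ N K at this
    omega
  have hN : Tendsto N atTop atTop := by
    rw [tendsto_atTop]
    intro b
    filter_upwards [eventually_ge_atTop (T b)] with K hK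
    exact Nat.le_findGreatest (P := fun n => T n ≤ K) ((hTge b).trans hK) hK
  refine tendsto_of_tendsto_of_tendsto_of_le_of_le' (hlow.comp hN) (hup.comp hN) ?_ ?_
  · filter_upwards [eventually_ge_atTop 1] with K hK
    exact div_le_div₀ (hA0 _) (hAmono (hN1 K)) (by positivity) (by exact_mod_cast (hN2 K).le)
  · filter_upwards [hN.eventually_ge_atTop 1] with K hK
    have := hTge (N K)
    exact div_le_div₀ (hA0 _) (hAmono (hN2 K).le)
      (by exact_mod_cast (by omega : 0 < T (N K))) (by exact_mod_cast hN1 K)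
end

section
/- Let p ∈ (0,1], α > 0, T ≥ 1 an integer, C > 0, and Z = 1/2 + (1−p)^T/(1 − (1−p)^T). Define f : [0,1] → ℝ by f(γ) = (1−γ) − Z + √( 2C/(T·α·p) − γ(1−γ) + Z² ). Then: (i) f is strictly decreasing on [0,1]; (ii) f(0) − f(1) = 1; and consequently (iii) there is exactly one γ* ∈ [0,1) such that f(γ*) is an integer, and f(γ*) = ⌊f(0)⌋ = ⌊1 − Z + √(Z² + 2C/(T·α·p))⌋. -/
/-- The candidate threshold `f(γ) = (1−γ) − Z + √(2C/(Tαp) − γ(1−γ) + Z²)` of the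
Frame-Based Decoupled Model is strictly decreasing on `[0,1]`, drops by exactly `1`
over `[0,1]`, and hence attains an integer value at exactly one `γ* ∈ [0,1)`, where
its value is `⌊f(0)⌋ = ⌊1 − Z + √(Z² + 2C/(Tαp))⌋`. -/
theorem stmt13 (p α C : ℝ) (T : ℕ) (hp : p ∈ Set.Ioc (0 : ℝ) 1) (hα : 0 < α)
    (hT : 1 ≤ T) (hC : 0 < C) :
    let Z : ℝ := 1 / 2 + (1 - p) ^ T / (1 - (1 - p) ^ T)
    let f : ℝ → ℝ := fun γ =>
      (1 - γ) - Z + Real.sqrt (2 * C / ((T : ℝ) * α * p) - γ * (1 - γ) + Z ^ 2)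
    StrictAntiOn f (Set.Icc 0 1)
    ∧ f 0 - f 1 = 1
    ∧ ∃ γ ∈ Set.Ico (0 : ℝ) 1, f γ = (⌊f 0⌋ : ℝ)
        ∧ ∀ γ' ∈ Set.Ico (0 : ℝ) 1, (∃ n : ℤ, f γ' = (n : ℝ)) → γ' = γ := by
  intro Z f
  have hp0 := hp.1
  have hZ : 1 / 2 ≤ Z := by
    have h1 : 0 ≤ (1 - p) ^ T := pow_nonneg (by linarith [hp.2]) T
    have h2 : (1 - p) ^ T ≤ 1 := pow_le_one₀ (by linarith [hp.2]) (by linarith)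
    have h3 : 0 ≤ (1 - p) ^ T / (1 - (1 - p) ^ T) := div_nonneg h1 (by linarith)
    simp only [Z]
    linarith
  have hT0 : (0 : ℝ) < T := by exact_mod_cast hT
  have hK : 0 < 2 * C / ((T : ℝ) * α * p) := by positivity
  have hf : f = fun γ =>
      (1 - γ) - Z + Real.sqrt (2 * C / ((T : ℝ) * α * p) - γ * (1 - γ) + Z ^ 2) := rfl
  clear_value f Z
  generalize 2 * C / ((T : ℝ) * α * p) = K at hK hf
  have hanti : StrictAntiOn f (Set.Icc 0 1) := by
    intro x hx y hy hxy
    have hs : x - 1 / 2 < Real.sqrt (K - x * (1 - x) + Z ^ 2) := by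
      apply Real.lt_sqrt_of_sq_lt
      nlinarith
    have hs0 := Real.sqrt_nonneg (K - x * (1 - x) + Z ^ 2)
    have hsq : Real.sqrt (K - x * (1 - x) + Z ^ 2) ^ 2 = K - x * (1 - x) + Z ^ 2 :=
      Real.sq_sqrt (by nlinarith [sq_nonneg (x - 1 / 2)])
    have key : Real.sqrt (K - y * (1 - y) + Z ^ 2)
        < (y - x) + Real.sqrt (K - x * (1 - x) + Z ^ 2) := by
      rw [Real.sqrt_lt' (by linarith)]
      nlinarith [mul_pos (sub_pos.2 hxy) (sub_pos.2 hs)]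
    simp only [hf]
    linarith
  have h01 : f 0 - f 1 = 1 := by
    simp only [hf]
    norm_num
  have hcont : ContinuousOn f (Set.Icc 0 1) := by
    rw [hf]
    fun_prop
  refine ⟨hanti, h01, ?_⟩
  have hl := Int.floor_le (f 0)
  have hr := Int.lt_floor_add_one (f 0)
  obtain ⟨γ, hγ, hfγ⟩ := intermediate_value_Icc' (zero_le_one) hcont
    (show (⌊f 0⌋ : ℝ) ∈ Set.Icc (f 1) (f 0) from ⟨by linarith, hl⟩)
  refine ⟨γ, ⟨hγ.1, lt_of_le_of_ne hγ.2 ?_⟩, hfγ, ?_⟩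
  · rintro rfl
    linarith
  · rintro γ' hγ' ⟨n, hn⟩
    have hm : γ' ∈ Set.Icc (0 : ℝ) 1 := ⟨hγ'.1, hγ'.2.le⟩
    have h1 : f 1 < f γ' := hanti hm ⟨zero_le_one, le_refl _⟩ hγ'.2
    have h2 : f γ' ≤ f 0 := hanti.antitoneOn ⟨le_refl _, zero_le_one⟩ hm hγ'.1
    have h3 : ⌊f 0⌋ = n := by
      rw [Int.floor_eq_iff]
      constructor <;> linarith
    apply hanti.injOn hm hγ
    rw [hn, hfγ, h3]
end

section
/- Let p ∈ (0,1], α > 0 and T ≥ 1 an integer, and set Z = 1/2 + (1−p)^T/(1 − (1−p)^T). Define H(C) = ⌊ 1 − Z + √( Z² + 2C/(p·T·α) ) ⌋ for C ≥ 0. Then: (i) H is monotone nondecreasing in C on [0,∞); (ii) H(0) = 1; and (iii) H(C) → ∞ as C → ∞. Equivalently, the idling set P(C) = { h ∈ {1,2,…} : h < H(C) } increases monotonically from the empty set to all of {1,2,…} as C increases from 0 to ∞, i.e. the Decoupled Model is indexable. -/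
open Filter

/-- Indexability of the Decoupled Model: the threshold
`H(C) = ⌊1 − Z + √(Z² + 2C/(pTα))⌋` is nondecreasing in the service charge `C ≥ 0`,
equals `1` at `C = 0`, and tends to `∞` as `C → ∞`; equivalently the idling set
`P(C) = {h ≥ 1 : h < H(C)}` increases monotonically from `∅` to all of `{1,2,…}`. -/
theorem stmt14 (p α : ℝ) (T : ℕ) (hp : p ∈ Set.Ioc (0 : ℝ) 1) (hα : 0 < α)
    (hT : 1 ≤ T) :
    let Z : ℝ := 1 / 2 + (1 - p) ^ T / (1 - (1 - p) ^ T)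
    let H : ℝ → ℤ := fun C => ⌊1 - Z + Real.sqrt (Z ^ 2 + 2 * C / (p * (T : ℝ) * α))⌋
    let P : ℝ → Set ℕ := fun C => {h : ℕ | 1 ≤ h ∧ (h : ℤ) < H C}
    (∀ C₁ C₂ : ℝ, 0 ≤ C₁ → C₁ ≤ C₂ → H C₁ ≤ H C₂)
    ∧ H 0 = 1
    ∧ Tendsto H atTop atTop
    ∧ (∀ C₁ C₂ : ℝ, 0 ≤ C₁ → C₁ ≤ C₂ → P C₁ ⊆ P C₂)
    ∧ P 0 = ∅
    ∧ (∀ h : ℕ, 1 ≤ h → ∃ C : ℝ, 0 ≤ C ∧ h ∈ P C) := by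
  intro Z H P
  obtain ⟨hp0, hp1⟩ := hp
  have hTpos : (0 : ℝ) < T := by exact_mod_cast hT
  have hk : 0 < p * (T : ℝ) * α := by positivity
  have hq0 : 0 ≤ (1 - p) ^ T := pow_nonneg (by linarith) T
  have hq1 : (1 - p) ^ T < 1 := pow_lt_one₀ (by linarith) (by linarith) (by omega)
  have hZ : 0 ≤ Z := by
    have h1 : 0 ≤ (1 - p) ^ T / (1 - (1 - p) ^ T) := div_nonneg hq0 (by linarith)
    show 0 ≤ 1 / 2 + (1 - p) ^ T / (1 - (1 - p) ^ T)
    linarith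
  have hmono : ∀ C₁ C₂ : ℝ, 0 ≤ C₁ → C₁ ≤ C₂ → H C₁ ≤ H C₂ := by
    intro C₁ C₂ _ h
    apply Int.floor_le_floor
    have h2 : 2 * C₁ / (p * (T : ℝ) * α) ≤ 2 * C₂ / (p * (T : ℝ) * α) :=
      div_le_div_of_nonneg_right (by linarith) hk.le
    have := Real.sqrt_le_sqrt (show Z ^ 2 + 2 * C₁ / (p * (T : ℝ) * α) ≤
      Z ^ 2 + 2 * C₂ / (p * (T : ℝ) * α) by linarith)
    linarith
  have h0 : H 0 = 1 := by
    show ⌊1 - Z + Real.sqrt (Z ^ 2 + 2 * 0 / (p * (T : ℝ) * α))⌋ = 1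
    rw [mul_zero, zero_div, add_zero, Real.sqrt_sq hZ, sub_add_cancel, Int.floor_one]
  have hlim : Tendsto H atTop atTop := by
    refine tendsto_floor_atTop.comp ?_
    refine tendsto_atTop_add_const_left _ _ ?_
    refine Real.tendsto_sqrt_atTop.comp ?_
    refine tendsto_atTop_add_const_left _ _ ?_
    exact (tendsto_id.const_mul_atTop (by norm_num : (0 : ℝ) < 2)).atTop_div_const hk
  refine ⟨hmono, h0, hlim, ?_, ?_, ?_⟩
  · rintro C₁ C₂ h1 h2 h ⟨ha, hb⟩
    exact ⟨ha, lt_of_lt_of_le hb (hmono C₁ C₂ h1 h2)⟩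
  · ext h
    simp only [Set.mem_empty_iff_false, iff_false]
    rintro ⟨ha, hb⟩
    rw [h0] at hb
    omega
  · intro h hh
    obtain ⟨C, hC, hC0⟩ := ((hlim.eventually_gt_atTop (h : ℤ)).and (eventually_ge_atTop 0)).exists
    exact ⟨C, hC0, hh, hC⟩
end

section
/- Let p ∈ (0,1], α > 0, T ≥ 1 an integer, h ≥ 1 an integer, and Z = 1/2 + (1−p)^T/(1 − (1−p)^T). Then the unique real C ≥ 0 satisfying 1 − Z + √( Z² + 2C/(p·T·α) ) = h + 1 is C = (p·T·α/2)·h·( h + (1 + (1−p)^T)/(1 − (1−p)^T) ). That is, the Whittle Index — the infimum service charge making idling and transmitting equally desirable in age state h — is proportional to p·α·h·( h + (1+(1−p)^T)/(1−(1−p)^T) ). -/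
/-- Closed form of the Whittle Index: for age state `h ≥ 1`, the unique service
charge `C ≥ 0` with `1 − Z + √(Z² + 2C/(pTα)) = h + 1` is
`C = (pTα/2)·h·(h + (1+(1−p)^T)/(1−(1−p)^T))`. -/
theorem stmt15 (p α : ℝ) (T h : ℕ) (hp : p ∈ Set.Ioc (0 : ℝ) 1) (hα : 0 < α)
    (hT : 1 ≤ T) (hh : 1 ≤ h) :
    let Z : ℝ := 1 / 2 + (1 - p) ^ T / (1 - (1 - p) ^ T)
    let C₀ : ℝ := (p * (T : ℝ) * α / 2) * (h : ℝ) *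
      ((h : ℝ) + (1 + (1 - p) ^ T) / (1 - (1 - p) ^ T))
    0 ≤ C₀
    ∧ 1 - Z + Real.sqrt (Z ^ 2 + 2 * C₀ / (p * (T : ℝ) * α)) = (h : ℝ) + 1
    ∧ ∀ C : ℝ, 0 ≤ C →
        1 - Z + Real.sqrt (Z ^ 2 + 2 * C / (p * (T : ℝ) * α)) = (h : ℝ) + 1 →
        C = C₀ := by
  intro Z C₀
  obtain ⟨hp0, hp1⟩ := hp
  have hq0 : 0 ≤ (1 - p) ^ T := pow_nonneg (by linarith) T
  have hq1 : (1 - p) ^ T < 1 := pow_lt_one₀ (by linarith) (by linarith) (by omega)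
  have hd : 0 < 1 - (1 - p) ^ T := by linarith
  have hTpos : (0 : ℝ) < T := by exact_mod_cast hT
  have hk : 0 < p * (T : ℝ) * α := by positivity
  have hZ : 0 < Z := by
    have : 0 ≤ (1 - p) ^ T / (1 - (1 - p) ^ T) := div_nonneg hq0 hd.le
    simp only [Z]; linarith
  have hZ2 : (1 + (1 - p) ^ T) / (1 - (1 - p) ^ T) = 2 * Z := by
    simp only [Z]; field_simp; ring
  have hC : C₀ = (p * (T : ℝ) * α / 2) * (h : ℝ) * ((h : ℝ) + 2 * Z) := by
    simp only [C₀]; rw [hZ2]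
  clear_value Z C₀
  generalize p * (T : ℝ) * α = k at *
  have hh0 : (0 : ℝ) ≤ h := Nat.cast_nonneg h
  refine ⟨by rw [hC]; positivity, ?_, ?_⟩
  · have : Z ^ 2 + 2 * C₀ / k = (Z + h) ^ 2 := by
      rw [hC]; field_simp; ring
    rw [this, Real.sqrt_sq (by positivity)]; ring
  · intro C hC0 hE
    have h1 : Real.sqrt (Z ^ 2 + 2 * C / k) = Z + h := by linarith
    have h2 : Z ^ 2 + 2 * C / k = (Z + h) ^ 2 := by
      rw [← h1, Real.sq_sqrt (by positivity)]
    have h3 : 2 * C / k = (h : ℝ) * (h + 2 * Z) := by linarith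
    rw [div_eq_iff hk.ne'] at h3
    rw [hC]; linarith
end
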